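/- arXiv:1606.01783 — 10 statements merged into one kernel-verified Lean document; each statement's English description precedes it below -/
import Mathlib

section
/- Let k ≥ 1 and let n = (n_1, …, n_k) be a vector of positive integers. The following are equivalent: (a) n is a lonely runner instance; (b) there exists m ∈ ℤ^k with all coordinates nonnegative such that m ∈ P(n); (c) P(n) ∩ ℤ^k ≠ ∅. -/
/-!
A real `x` is at distance at least `δ` from `ℤ` exactly when it lies in some interval
`[m + δ, m + 1 - δ]` with `m` an integer (`le_distNearestInt_iff`). For `δ = 1/(k+1)`, applied to the
coordinates of `t n`, this says that `t n - m` lies in the cube `[1/(k+1), k/(k+1)]^k`, i.e. that the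
integer point `m` belongs to `P(n)` (`isLonelyRunnerInstance_iff`). Moreover `P(n)` is invariant under
translation by `n`, whose coordinates are positive, so an integer point of `P(n)` can be translated
into the nonnegative orthant (`exists_nonneg_mem_lrPoly`).
-/

/-- The distance from a real number `x` to the nearest integer. -/
noncomputable def distNearestInt (x : ℝ) : ℝ := ⨅ m : ℤ, |x - m|

/-- A vector `n` of positive integers is a *lonely runner instance* if there is a
time `t` such that every `t·n j` has distance at least `1/(k+1)` to the nearest integer. -/
noncomputable def IsLonelyRunnerInstance (k : ℕ) (n : Fin k → ℤ) : Prop :=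
  ∃ t : ℝ, ∀ j : Fin k, (1 : ℝ) / (k + 1) ≤ distNearestInt (t * n j)

/-- The lonely runner polyhedron `P(n) = ℝ n - [1/(k+1), k/(k+1)]^k`. -/
def lrPoly (k : ℕ) (n : Fin k → ℤ) : Set (Fin k → ℝ) :=
  { x | ∃ (lam : ℝ) (mu : Fin k → ℝ),
      (∀ j, (1 : ℝ) / (k + 1) ≤ mu j ∧ mu j ≤ (k : ℝ) / (k + 1)) ∧
      ∀ j, x j = lam * n j - mu j }

theorem le_distNearestInt_iff (δ x : ℝ) :
    δ ≤ distNearestInt x ↔ ∃ m : ℤ, (m : ℝ) + δ ≤ x ∧ x ≤ m + (1 - δ) := by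
  have hbdd : BddBelow (Set.range fun m : ℤ => |x - m|) :=
    ⟨0, by rintro _ ⟨m, rfl⟩; exact abs_nonneg _⟩
  unfold distNearestInt
  rw [le_ciInf_iff hbdd]
  constructor
  · intro h
    refine ⟨⌊x⌋, ?_, ?_⟩
    · have h1 := h ⌊x⌋
      rw [abs_of_nonneg (by linarith [Int.floor_le x])] at h1
      linarith
    · have h1 := h (⌊x⌋ + 1)
      push_cast at h1
      rw [abs_of_nonpos (by linarith [Int.lt_floor_add_one x])] at h1
      linarith
  · rintro ⟨m, h1, h2⟩ i
    rcases le_or_gt i m with hi | hi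
    · have hi' : (i : ℝ) ≤ m := by exact_mod_cast hi
      exact le_trans (by linarith) (le_abs_self _)
    · have hi' : (m : ℝ) + 1 ≤ i := by exact_mod_cast hi
      exact le_trans (by linarith) (neg_le_abs _)

theorem isLonelyRunnerInstance_iff (k : ℕ) (n : Fin k → ℤ) :
    IsLonelyRunnerInstance k n ↔ ∃ m : Fin k → ℤ, (fun j => (m j : ℝ)) ∈ lrPoly k n := by
  have hk : (1 : ℝ) - 1 / (k + 1) = k / (k + 1) := by
    have : (k : ℝ) + 1 ≠ 0 := by positivity
    field_simp
    ring
  simp only [IsLonelyRunnerInstance, le_distNearestInt_iff, hk]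
  constructor
  · rintro ⟨t, ht⟩
    choose m hm using ht
    refine ⟨m, t, fun j => t * n j - m j, fun j => ?_, fun j => by ring⟩
    obtain ⟨h1, h2⟩ := hm j
    constructor <;> linarith
  · rintro ⟨m, t, μ, hμ, hm⟩
    refine ⟨t, fun j => ⟨m j, ?_⟩⟩
    have hj : (m j : ℝ) = t * n j - μ j := hm j
    obtain ⟨h1, h2⟩ := hμ j
    constructor <;> linarith

theorem exists_nonneg_mem_lrPoly {k : ℕ} {n : Fin k → ℤ} (hn : ∀ j, 0 < n j)
    {m : Fin k → ℤ} (hm : (fun j => (m j : ℝ)) ∈ lrPoly k n) :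
    ∃ m' : Fin k → ℤ, (∀ j, 0 ≤ m' j) ∧ (fun j => (m' j : ℝ)) ∈ lrPoly k n := by
  obtain ⟨t, μ, hμ, h⟩ := hm
  -- As `n j ≥ 1`, any integer `N ≥ |m j|` for all `j` makes `m + N n` nonnegative.
  set N : ℤ := ∑ i, |m i| with hN
  have hle : ∀ j, |m j| ≤ N := fun j =>
    Finset.single_le_sum (f := fun i => |m i|) (fun i _ => abs_nonneg (m i)) (Finset.mem_univ j)
  refine ⟨fun j => m j + N * n j, fun j => ?_, t + N, μ, hμ, fun j => ?_⟩
  · have h0 : 0 ≤ N := le_trans (abs_nonneg _) (hle j)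
    have h1 : N ≤ N * n j := le_mul_of_one_le_right h0 (hn j)
    linarith [neg_abs_le (m j), hle j]
  · have hj : (m j : ℝ) = t * n j - μ j := h j
    push_cast
    linarith

/-- Proposition 1: `n` is a lonely runner instance iff `P(n)` contains a nonnegative
integer point iff `P(n)` contains an integer point. -/
theorem lonely_runner_polyhedron_characterization (k : ℕ) (hk : 1 ≤ k)
    (n : Fin k → ℤ) (hn : ∀ j, 0 < n j) :
    (IsLonelyRunnerInstance k n ↔
      ∃ m : Fin k → ℤ, (∀ j, 0 ≤ m j) ∧ (fun j => (m j : ℝ)) ∈ lrPoly k n) ∧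
    ((∃ m : Fin k → ℤ, (∀ j, 0 ≤ m j) ∧ (fun j => (m j : ℝ)) ∈ lrPoly k n) ↔
      ∃ m : Fin k → ℤ, (fun j => (m j : ℝ)) ∈ lrPoly k n) := by
  have hbc : (∃ m : Fin k → ℤ, (∀ j, 0 ≤ m j) ∧ (fun j => (m j : ℝ)) ∈ lrPoly k n) ↔
      ∃ m : Fin k → ℤ, (fun j => (m j : ℝ)) ∈ lrPoly k n :=
    ⟨fun ⟨m, _, hm⟩ => ⟨m, hm⟩, fun ⟨_, hm⟩ => exists_nonneg_mem_lrPoly hn hm⟩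
  exact ⟨(isLonelyRunnerInstance_iff k n).trans hbc.symm, hbc⟩
end

section
/- Let k ≥ 1 and let n = (n_1, …, n_k) be a vector of positive integers. Then P(n) = { x ∈ ℝ^k : (n_i − k·n_j)/(k+1) ≤ n_j·x_i − n_i·x_j ≤ (k·n_i − n_j)/(k+1) for all 1 ≤ i < j ≤ k }. -/
/-- Equation (4): the inequality description of the lonely runner polyhedron. -/
theorem lrPoly_eq_inequality_description (k : ℕ) (hk : 1 ≤ k)
    (n : Fin k → ℤ) (hn : ∀ j, 0 < n j) :
    lrPoly k n =
      { x : Fin k → ℝ | ∀ i j : Fin k, i < j →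
          ((n i : ℝ) - k * n j) / (k + 1) ≤ (n j : ℝ) * x i - (n i : ℝ) * x j ∧
          (n j : ℝ) * x i - (n i : ℝ) * x j ≤ ((k : ℝ) * n i - n j) / (k + 1) } := by
  have hK : (0 : ℝ) < k + 1 := by positivity
  have hn' : ∀ j, (0 : ℝ) < n j := fun j => by exact_mod_cast hn j
  ext x
  simp only [lrPoly, Set.mem_ofPred_eq]
  constructor
  · rintro ⟨lam, mu, hmu, hx⟩ i j -
    -- The terms in `lam` cancel.
    have e : (n j : ℝ) * x i - n i * x j = n i * mu j - n j * mu i := by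
      rw [hx i, hx j]; ring
    have h1 := mul_le_mul_of_nonneg_left (hmu j).1 (hn' i).le
    have h2 := mul_le_mul_of_nonneg_left (hmu j).2 (hn' i).le
    have h3 := mul_le_mul_of_nonneg_left (hmu i).1 (hn' j).le
    have h4 := mul_le_mul_of_nonneg_left (hmu i).2 (hn' j).le
    rw [e]
    constructor
    · calc ((n i : ℝ) - k * n j) / (k + 1)
          = n i * (1 / (k + 1)) - n j * (k / (k + 1)) := by ring
        _ ≤ _ := by linarith
    · calc (n i : ℝ) * mu j - n j * mu i
          ≤ n i * (k / (k + 1)) - n j * (1 / (k + 1)) := by linarith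
        _ = _ := by ring
  · intro h
    have hall : ∀ i j, (n j : ℝ) * x i - n i * x j ≤ (k * n i - n j) / (k + 1) := by
      intro i j
      rcases lt_trichotomy i j with hij | rfl | hij
      · exact (h i j hij).2
      · -- On the diagonal the bound says `0 ≤ (k - 1) * n i / (k + 1)`.
        have hk' : (1 : ℝ) ≤ k := by exact_mod_cast hk
        rw [sub_self]
        have := mul_le_mul_of_nonneg_right hk' (hn' i).le
        exact div_nonneg (by linarith) hK.le
      · have h1 := (h j i hij).1
        have e : ((k : ℝ) * n i - n j) / (k + 1) = -((n j - k * n i) / (k + 1)) := by ring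
        linarith
    have hpair : ∀ i j, (x i + 1 / (k + 1)) / n i ≤ (x j + k / (k + 1)) / n j := by
      intro i j
      rw [div_le_div_iff₀ (hn' i) (hn' j)]
      have e : ((k : ℝ) * n i - n j) / (k + 1)
          = k / (k + 1) * n i - 1 / (k + 1) * n j := by ring
      linarith [hall i j]
    have : Nonempty (Fin k) := ⟨⟨0, hk⟩⟩
    obtain ⟨m, hm⟩ := Finite.exists_max fun i => (x i + 1 / (k + 1)) / n i
    -- The largest left endpoint lies in every interval.
    refine ⟨(x m + 1 / (k + 1)) / n m,
      fun j => (x m + 1 / (k + 1)) / n m * n j - x j, fun j => ⟨?_, ?_⟩, fun j => by ring⟩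
    · have := (div_le_iff₀ (hn' j)).1 (hm j)
      linarith
    · have := (le_div_iff₀ (hn' j)).1 (hpair m j)
      linarith
end

section
/- Let k ≥ 1 and let n = (n_1, …, n_k) be a vector of positive integers with n_1 the largest and n_k the smallest coordinate. Then n_1 ≤ k·n_k if and only if the origin 0 ∈ ℝ^k belongs to P(n), i.e., if and only if there exists a real number λ such that 1/(k+1) ≤ λ·n_j ≤ k/(k+1) for all 1 ≤ j ≤ k. -/
/-- Proposition 2 (first part): if `n₁` is the largest and `n_k` the smallest
coordinate of `n`, then `n₁ ≤ k·n_k` iff `0 ∈ P(n)`, i.e. iff there is a real `λ`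
with `1/(k+1) ≤ λ·n_j ≤ k/(k+1)` for all `j`. -/
theorem zero_mem_lrPoly_iff (k : ℕ) (hk : 1 ≤ k) (n : Fin k → ℤ) (hn : ∀ j, 0 < n j)
    (hmax : ∀ j, n j ≤ n ⟨0, hk⟩) (hmin : ∀ j, n ⟨k - 1, by omega⟩ ≤ n j) :
    (n ⟨0, hk⟩ ≤ (k : ℤ) * n ⟨k - 1, by omega⟩ ↔ (0 : Fin k → ℝ) ∈ lrPoly k n) ∧
    (n ⟨0, hk⟩ ≤ (k : ℤ) * n ⟨k - 1, by omega⟩ ↔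
      ∃ lam : ℝ, ∀ j, (1 : ℝ) / (k + 1) ≤ lam * n j ∧ lam * n j ≤ (k : ℝ) / (k + 1)) := by
  have key : n ⟨0, hk⟩ ≤ (k : ℤ) * n ⟨k - 1, by omega⟩ ↔
      ∃ lam : ℝ, ∀ j, (1 : ℝ) / (k + 1) ≤ lam * n j ∧ lam * n j ≤ (k : ℝ) / (k + 1) := by
    have hk1 : (0 : ℝ) < k + 1 := by positivity
    have hm : (0 : ℝ) < n ⟨k - 1, by omega⟩ := by exact_mod_cast hn _
    constructor
    · intro h
      refine ⟨1 / ((k + 1) * n ⟨k - 1, by omega⟩), fun j => ?_⟩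
      have h1 : (n ⟨k - 1, by omega⟩ : ℝ) ≤ n j := by exact_mod_cast hmin j
      have h2 : (n j : ℝ) ≤ k * n ⟨k - 1, by omega⟩ := by exact_mod_cast (hmax j).trans h
      rw [div_mul_eq_mul_div, one_mul]
      constructor
      · rw [div_le_div_iff₀ hk1 (by positivity)]
        nlinarith
      · rw [div_le_div_iff₀ (by positivity) hk1]
        nlinarith
    · rintro ⟨lam, h⟩
      have h1 := (h ⟨k - 1, by omega⟩).1
      have h2 := (h ⟨0, hk⟩).2
      have hlam : 0 < lam :=
        pos_of_mul_pos_left (lt_of_lt_of_le (by positivity) h1) hm.le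
      have h3 : (n ⟨0, hk⟩ : ℝ) ≤ k * n ⟨k - 1, by omega⟩ := by
        refine le_of_mul_le_mul_left ?_ hlam
        calc lam * (n ⟨0, hk⟩ : ℝ) ≤ k * (1 / (k + 1)) := by rwa [mul_one_div]
          _ ≤ k * (lam * n ⟨k - 1, by omega⟩) := by gcongr
          _ = lam * (k * n ⟨k - 1, by omega⟩) := by ring
      exact_mod_cast h3
  refine ⟨key.trans ⟨?_, ?_⟩, key⟩
  · rintro ⟨lam, h⟩
    exact ⟨lam, fun j => lam * n j, h, fun j => by simp⟩
  · rintro ⟨lam, mu, hmu, h⟩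
    refine ⟨lam, fun j => ?_⟩
    have hj : lam * n j = mu j := by simpa [sub_eq_zero, eq_comm] using h j
    rw [hj]
    exact hmu j
end

section
/- Let k ≥ 1 and let n = (n_1, …, n_k) be a vector of positive integers with n_1 the largest and n_k the smallest coordinate. If n_1 ≤ k·n_k, then n is a lonely runner instance. -/
theorem le_distNearestInt {x δ : ℝ} (h₁ : δ ≤ x) (h₂ : x ≤ 1 - δ) : δ ≤ distNearestInt x := by
  refine le_ciInf fun m => ?_
  rcases le_or_gt m 0 with hm | hm
  · have hm' : (m : ℝ) ≤ 0 := by exact_mod_cast hm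
    exact le_trans (by linarith) (le_abs_self _)
  · have hm' : (1 : ℝ) ≤ m := by exact_mod_cast hm
    exact le_trans (by linarith) (neg_le_abs _)

/-- Proposition 2 (second part): if `n₁` is the largest and `n_k` the smallest
coordinate of `n` and `n₁ ≤ k·n_k`, then `n` is a lonely runner instance. -/
theorem lonely_runner_of_max_le_k_mul_min (k : ℕ) (hk : 1 ≤ k)
    (n : Fin k → ℤ) (hn : ∀ j, 0 < n j)
    (hmax : ∀ j, n j ≤ n ⟨0, hk⟩) (hmin : ∀ j, n ⟨k - 1, by omega⟩ ≤ n j)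
    (h : n ⟨0, hk⟩ ≤ (k : ℤ) * n ⟨k - 1, by omega⟩) :
    IsLonelyRunnerInstance k n := by
  have hm : (0 : ℝ) < n ⟨k - 1, by omega⟩ := by exact_mod_cast hn _
  have hk1 : (0 : ℝ) < k + 1 := by positivity
  refine ⟨1 / ((k + 1) * n ⟨k - 1, by omega⟩), fun j => ?_⟩
  have h₁ : (n ⟨k - 1, by omega⟩ : ℝ) ≤ n j := by exact_mod_cast hmin j
  have h₂ : (n j : ℝ) ≤ k * n ⟨k - 1, by omega⟩ := by exact_mod_cast (hmax j).trans h
  generalize (n ⟨k - 1, by omega⟩ : ℝ) = m at *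
  apply le_distNearestInt
  · rw [one_div_mul_eq_div, div_le_div_iff₀ hk1 (by positivity)]
    nlinarith
  · have e : (1 : ℝ) - 1 / (k + 1) = k / (k + 1) := by field_simp; ring
    rw [e, one_div_mul_eq_div, div_le_div_iff₀ (by positivity) hk1]
    nlinarith
end

section
/- Let k ≥ 1 and let n = (n_1, …, n_k) be a vector of positive integers with n_1 ≥ n_2 ≥ … ≥ n_k. If m ∈ ℤ^k has all coordinates nonnegative and m ∈ P(n), then m_1 ≥ m_2 ≥ … ≥ m_k. -/
/-- Proposition 3: if the speeds are nonincreasing and `m` is a nonnegative integer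
point of `P(n)`, then the coordinates of `m` are nonincreasing as well. -/
theorem lrPoly_lattice_point_monotone (k : ℕ) (hk : 1 ≤ k)
    (n : Fin k → ℤ) (hn : ∀ j, 0 < n j)
    (hmono : ∀ i j : Fin k, i ≤ j → n j ≤ n i)
    (m : Fin k → ℤ) (hm : ∀ j, 0 ≤ m j)
    (hmem : (fun j => (m j : ℝ)) ∈ lrPoly k n) :
    ∀ i j : Fin k, i ≤ j → m j ≤ m i := by
  obtain ⟨lam, mu, hmu, hx⟩ := hmem
  intro i j hij
  have hk1 : (0 : ℝ) < (k : ℝ) + 1 := by positivity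
  have hpos : (0 : ℝ) < 1 / ((k : ℝ) + 1) := by positivity
  have hlt : (k : ℝ) / (k + 1) < 1 := by
    rw [div_lt_one hk1]
    linarith
  have hmj : (0 : ℝ) ≤ m j := by exact_mod_cast hm j
  have hnj : (0 : ℝ) < n j := by exact_mod_cast hn j
  have hnij : (n j : ℝ) ≤ n i := by exact_mod_cast hmono i j hij
  have hxi : (m i : ℝ) = lam * n i - mu i := hx i
  have hxj : (m j : ℝ) = lam * n j - mu j := hx j
  have hlam : 0 < lam := by
    refine pos_of_mul_pos_left (b := (n j : ℝ)) ?_ hnj.le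
    linarith [(hmu j).1]
  have hmul : lam * n j ≤ lam * n i := mul_le_mul_of_nonneg_left hnij hlam.le
  have hstep : (m j : ℝ) < m i + 1 := by linarith [(hmu i).2, (hmu j).1]
  exact Int.lt_add_one_iff.mp (by exact_mod_cast hstep)
end

section
/- Let k ≥ 3 and let n = (n_1, …, n_k) be a vector of positive integers with n_1 ≥ n_2 ≥ … ≥ n_k. If n_2 ≤ (k−2)·n_k, then n is a lonely runner instance. -/
lemma le_distNearestInt_of_mem {x δ : ℝ} (m : ℤ) (h₁ : m + δ ≤ x) (h₂ : x ≤ m + 1 - δ) :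
    δ ≤ distNearestInt x := by
  refine le_ciInf fun p => ?_
  rcases le_or_gt p m with hp | hp
  · have : (p : ℝ) ≤ m := by exact_mod_cast hp
    exact le_trans (by linarith) (le_abs_self _)
  · have : (m : ℝ) + 1 ≤ p := by exact_mod_cast hp
    exact le_trans (by linarith) (neg_le_abs _)

/-- A closed interval of length at least `2 * δ / v` contains a time at which speed `v` is at
distance at least `δ` from the integers. -/
lemma exists_time_in_Icc {a b v δ : ℝ} (hv : 0 < v) (hδ : 0 < δ) (hδ' : δ ≤ 1 / 2)
    (hab : a * v + 2 * δ ≤ b * v) :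
    ∃ t, a ≤ t ∧ t ≤ b ∧ δ ≤ distNearestInt (t * v) := by
  by_cases h : δ ≤ distNearestInt (a * v)
  · refine ⟨a, le_rfl, ?_, h⟩
    exact le_of_mul_le_mul_right (by linarith) hv
  · obtain ⟨m, hm⟩ := exists_lt_of_ciInf_lt (not_le.mp h)
    obtain ⟨hm₁, hm₂⟩ := abs_lt.mp hm
    refine ⟨(m + δ) / v, ?_, ?_, ?_⟩
    · rw [le_div_iff₀ hv]; linarith
    · rw [div_le_iff₀ hv]; linarith
    · rw [div_mul_cancel₀ _ hv.ne']
      exact le_distNearestInt_of_mem m le_rfl (by linarith)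

/-- Theorem 7 (a): if `k ≥ 3`, the speeds are nonincreasing, and
`n₂ ≤ (k-2)·n_k`, then `n` is a lonely runner instance. -/
theorem lonely_runner_second_speed_small (k : ℕ) (hk : 3 ≤ k)
    (n : Fin k → ℤ) (hn : ∀ j, 0 < n j)
    (hmono : ∀ i j : Fin k, i ≤ j → n j ≤ n i)
    (h : n ⟨1, by omega⟩ ≤ ((k : ℤ) - 2) * n ⟨k - 1, by omega⟩) :
    IsLonelyRunnerInstance k n := by
  have hpos : ∀ j, (0 : ℝ) < n j := fun j => by exact_mod_cast hn j
  have hmonoR : ∀ i j : Fin k, i ≤ j → (n j : ℝ) ≤ n i := fun i j hij => by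
    exact_mod_cast hmono i j hij
  have hR : (n ⟨1, by omega⟩ : ℝ) ≤ ((k : ℝ) - 2) * n ⟨k - 1, by omega⟩ := by exact_mod_cast h
  have hkR : (3 : ℝ) ≤ k := by exact_mod_cast hk
  have hu := hpos ⟨1, by omega⟩
  have hw := hpos ⟨k - 1, by omega⟩
  have hv := hpos ⟨0, by omega⟩
  have huv := hmonoR ⟨0, by omega⟩ ⟨1, by omega⟩ (by simp [Fin.le_def])
  have hmid : ∀ j : Fin k, j ≠ ⟨0, by omega⟩ →
      (n ⟨k - 1, by omega⟩ : ℝ) ≤ n j ∧ (n j : ℝ) ≤ n ⟨1, by omega⟩ := fun j hj => by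
    have hj0 : j.val ≠ 0 := fun h0 => hj (Fin.ext h0)
    have := j.isLt
    exact ⟨hmonoR _ _ (by simp only [Fin.le_def]; omega),
      hmonoR _ _ (by simp only [Fin.le_def]; omega)⟩
  generalize (n ⟨1, by omega⟩ : ℝ) = u at *
  generalize (n ⟨k - 1, by omega⟩ : ℝ) = w at *
  obtain ⟨δ, hδ⟩ : ∃ δ : ℝ, δ = 1 / ((k : ℝ) + 1) := ⟨_, rfl⟩
  have hδ0 : 0 < δ := by rw [hδ]; positivity
  have hδk : k * δ = 1 - δ := by rw [hδ]; field_simp; ring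
  have hδ2 : δ ≤ 1 / 2 := by nlinarith
  have hlen : δ / w + 2 * δ / u ≤ (1 - δ) / u := by
    rw [← hδk, div_add_div _ _ hw.ne' hu.ne', div_le_div_iff₀ (by positivity) hu]
    have := mul_le_mul_of_nonneg_left hR (by positivity : 0 ≤ δ * u)
    nlinarith
  have hlen' : δ / w * n ⟨0, by omega⟩ + 2 * δ ≤ (1 - δ) / u * n ⟨0, by omega⟩ := by
    have h1 := mul_le_mul_of_nonneg_right hlen hv.le
    have h2 : 2 * δ ≤ 2 * δ / u * n ⟨0, by omega⟩ := by
      rw [div_mul_eq_mul_div, le_div_iff₀ hu]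
      exact mul_le_mul_of_nonneg_left huv (by positivity)
    linarith
  obtain ⟨t, hat, htb, ht⟩ := exists_time_in_Icc hv hδ0 hδ2 hlen'
  rw [div_le_iff₀ hw] at hat
  rw [le_div_iff₀ hu] at htb
  have ht0 : 0 < t := pos_of_mul_pos_left (hδ0.trans_le hat) hw.le
  refine ⟨t, fun j => ?_⟩
  rw [← hδ]
  by_cases hj : j = ⟨0, by omega⟩
  · rw [hj]; exact ht
  · obtain ⟨hj₁, hj₂⟩ := hmid j hj
    have h1 := mul_le_mul_of_nonneg_left hj₁ ht0.le
    have h2 := mul_le_mul_of_nonneg_left hj₂ ht0.le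
    exact le_distNearestInt_of_mem 0 (by push_cast; linarith) (by push_cast; linarith)
end

section
/- Let k ≥ 3 and let n = (n_1, …, n_k) be a vector of positive integers with n_1 ≥ n_2 ≥ … ≥ n_k. If n_3 ≤ (k−2)·n_k and n_2 ≥ k·n_3, then n is a lonely runner instance. -/
lemma le_distNearestInt_of_mem_arc {d x : ℝ} (p : ℤ) (h1 : p + d ≤ x) (h2 : x ≤ p + 1 - d) :
    d ≤ distNearestInt x := by
  refine le_ciInf fun z => ?_
  rcases le_or_gt z p with h | h
  · have : (z : ℝ) ≤ p := by exact_mod_cast h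
    exact le_trans (by linarith) (le_abs_self _)
  · have : (p : ℝ) + 1 ≤ z := by exact_mod_cast h
    exact le_trans (by linarith) (neg_le_abs _)

/-- A closed interval of length at least `2 - 2d` contains an entire arc `[p + d, p + 1 - d]`. -/
lemma exists_arc_subset {d x y : ℝ} (h : x + (2 - 2 * d) ≤ y) :
    ∃ p : ℤ, x ≤ p + d ∧ p + 1 - d ≤ y := by
  have h1 := Int.le_ceil (x - d)
  have h2 := Int.ceil_lt_add_one (x - d)
  exact ⟨⌈x - d⌉, by linarith, by linarith⟩

/-- A closed interval whose length is at least the width `2d` of a bad arc contains a good point. -/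
lemma exists_good_mem_Icc {d x y : ℝ} (hd0 : 0 ≤ d) (hd : 2 * d ≤ 1) (h : x + 2 * d ≤ y) :
    ∃ s, x ≤ s ∧ s ≤ y ∧ d ≤ distNearestInt s := by
  have h1 := Int.le_ceil (x - d)
  have h2 := Int.ceil_lt_add_one (x - d)
  set q := ⌈x - d⌉
  rcases le_or_gt x (q - d) with hx | hx
  · exact ⟨x, le_rfl, by linarith, le_distNearestInt_of_mem_arc (q - 1)
      (by push_cast; linarith) (by push_cast; linarith)⟩
  · exact ⟨q + d, by linarith, by linarith, le_distNearestInt_of_mem_arc q le_rfl (by linarith)⟩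

/-- Theorem 7 (b): if `k ≥ 3`, the speeds are nonincreasing, `n₃ ≤ (k-2)·n_k`
and `n₂ ≥ k·n₃`, then `n` is a lonely runner instance. -/
theorem lonely_runner_two_fast_runners (k : ℕ) (hk : 3 ≤ k)
    (n : Fin k → ℤ) (hn : ∀ j, 0 < n j)
    (hmono : ∀ i j : Fin k, i ≤ j → n j ≤ n i)
    (h3 : n ⟨2, by omega⟩ ≤ ((k : ℤ) - 2) * n ⟨k - 1, by omega⟩)
    (h2 : (k : ℤ) * n ⟨2, by omega⟩ ≤ n ⟨1, by omega⟩) :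
    IsLonelyRunnerInstance k n := by
  have hkR : (3 : ℝ) ≤ k := by exact_mod_cast hk
  obtain ⟨d, hd⟩ : ∃ d : ℝ, d = 1 / ((k : ℝ) + 1) := ⟨_, rfl⟩
  have hd0 : 0 < d := by rw [hd]; positivity
  have hkd : (k : ℝ) * d = 1 - d := by rw [hd]; field_simp; ring
  have hd4 : 4 * d ≤ 1 := by nlinarith
  obtain ⟨m, hm⟩ : ∃ m : ℝ, m = n ⟨k - 1, by omega⟩ := ⟨_, rfl⟩
  obtain ⟨M, hM⟩ : ∃ M : ℝ, M = n ⟨2, by omega⟩ := ⟨_, rfl⟩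
  obtain ⟨b, hb⟩ : ∃ b : ℝ, b = n ⟨1, by omega⟩ := ⟨_, rfl⟩
  obtain ⟨a, ha⟩ : ∃ a : ℝ, a = n ⟨0, by omega⟩ := ⟨_, rfl⟩
  have hm0 : 0 < m := by rw [hm]; exact_mod_cast hn _
  have hM0 : 0 < M := by rw [hM]; exact_mod_cast hn _
  have hb0 : 0 < b := by rw [hb]; exact_mod_cast hn _
  have ha0 : 0 < a := by rw [ha]; exact_mod_cast hn _
  have hab : b ≤ a := by
    rw [ha, hb]; exact_mod_cast hmono ⟨0, by omega⟩ ⟨1, by omega⟩ (Fin.mk_le_mk.2 (by omega))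
  have h3R : M ≤ (k - 2) * m := by rw [hM, hm]; exact_mod_cast h3
  have h2R : k * M ≤ b := by rw [hM, hb]; exact_mod_cast h2
  have hlen : d / m + 2 * d / M ≤ (1 - d) / M := by
    rw [← hkd, div_add_div _ _ hm0.ne' hM0.ne', div_le_div_iff₀ (by positivity) hM0]
    nlinarith [mul_le_mul_of_nonneg_left h3R (mul_pos hd0 hM0).le]
  have hcover : d / m * b + (2 - 2 * d) ≤ (1 - d) / M * b := by
    have e : 2 - 2 * d ≤ 2 * d / M * b := by
      rw [div_mul_eq_mul_div, le_div_iff₀ hM0]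
      nlinarith [mul_le_mul_of_nonneg_left h2R hd0.le]
    nlinarith [mul_le_mul_of_nonneg_right hlen hb0.le]
  obtain ⟨p, hp1, hp2⟩ := exists_arc_subset hcover
  have hfast : (p + d) / b * a + 2 * d ≤ (p + 1 - d) / b * a := by
    have e : (p + 1 - d) / b * a - (p + d) / b * a = (1 - 2 * d) * (a / b) := by
      field_simp; ring
    have e1 : 1 ≤ a / b := (one_le_div hb0).2 hab
    nlinarith
  obtain ⟨s, hs1, hs2, hs⟩ := exists_good_mem_Icc hd0.le (by linarith) hfast
  have ht1 : (p + d) / b ≤ s / a := (le_div_iff₀ ha0).2 hs1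
  have ht2 : s / a ≤ (p + 1 - d) / b := (div_le_iff₀ ha0).2 hs2
  have hl : d / m ≤ s / a := ((le_div_iff₀ hb0).2 hp1).trans ht1
  have hr : s / a ≤ (1 - d) / M := ht2.trans ((div_le_iff₀ hb0).2 hp2)
  refine ⟨s / a, fun j => ?_⟩
  rw [← hd]
  obtain ⟨j, hj⟩ := j
  rcases j with _ | _ | j
  · rw [← ha, div_mul_cancel₀ _ ha0.ne']
    exact hs
  · change d ≤ distNearestInt (s / a * (n ⟨1, _⟩ : ℝ))
    rw [← hb]
    exact le_distNearestInt_of_mem_arc p ((div_le_iff₀ hb0).1 ht1) ((le_div_iff₀ hb0).1 ht2)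
  · have hjm : m ≤ n ⟨j + 1 + 1, hj⟩ := by
      rw [hm]; exact_mod_cast hmono _ _ (Fin.mk_le_mk.2 (by omega))
    have hjM : n ⟨j + 1 + 1, hj⟩ ≤ M := by
      rw [hM]; exact_mod_cast hmono _ _ (Fin.mk_le_mk.2 (by omega))
    have hs0 : 0 ≤ s / a := (div_pos hd0 hm0).le.trans hl
    have hl' := (div_le_iff₀ hm0).1 hl
    have hr' := (le_div_iff₀ hM0).1 hr
    refine le_distNearestInt_of_mem_arc 0 ?_ ?_
    · push_cast
      linarith [mul_le_mul_of_nonneg_left hjm hs0]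
    · push_cast
      linarith [mul_le_mul_of_nonneg_left hjM hs0]
end

section
/- Let k ≥ 2 and let n = (n_1, …, n_k) be a vector of positive integers with n_1 ≥ n_2 ≥ … ≥ n_k. Suppose that (k−1)·n_j ≥ 2k·n_{j+1} for all j with 2 ≤ j ≤ k−2, and that (k+1)·gcd(n_{k−1}, n_k) ≤ (k−1)·(n_{k−1} − n_k). Then n is a lonely runner instance. -/
/-- The time `t` lies in the `m`-th safe interval of a runner of speed `v`: `t * v` is within
`(k - 1) / (2 * (k + 1))` of `m + 1 / 2`. Denominators are cleared. -/
def InSafe (k : ℕ) (v m : ℤ) (t : ℝ) : Prop :=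
  ((k : ℝ) + 1) * |2 * (t * v) - (2 * m + 1)| ≤ k - 1

theorem InSafe.le_distNearestInt {k : ℕ} {v m : ℤ} {t : ℝ} (h : InSafe k v m t) :
    (1 : ℝ) / (k + 1) ≤ distNearestInt (t * v) := by
  unfold InSafe at h
  have hk : (0 : ℝ) < k + 1 := by positivity
  have h' : |2 * (t * v) - (2 * m + 1)| ≤ 1 - 2 * (1 / ((k : ℝ) + 1)) := by
    have e : 1 - 2 * (1 / ((k : ℝ) + 1)) = (k - 1) / (k + 1) := by field_simp; ring
    rw [e, le_div_iff₀ hk]; linarith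
  rw [abs_le] at h'
  refine le_ciInf fun j => ?_
  rcases le_or_gt j m with hj | hj
  · have : (j : ℝ) ≤ m := by exact_mod_cast hj
    exact le_trans (by linarith [h'.1]) (le_abs_self _)
  · have : (m : ℝ) + 1 ≤ j := by exact_mod_cast hj
    exact le_trans (by linarith [h'.2]) (neg_le_abs _)

theorem InSafe.of_centers_close {k : ℕ} {p q l m : ℤ} {t : ℝ} (hp : 0 < p) (hq : 0 < q)
    (hc : ((k : ℤ) + 1) * |(2 * l + 1) * q - (2 * m + 1) * p| ≤ ((k : ℤ) - 1) * (p - q))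
    (h : InSafe k p l t) : InSafe k q m t := by
  unfold InSafe at *
  have hp' : (0 : ℝ) < p := by exact_mod_cast hp
  have hq' : (0 : ℝ) < q := by exact_mod_cast hq
  have hk : (0 : ℝ) < k + 1 := by positivity
  have hc' : ((k : ℝ) + 1) * |((2 * l + 1) * q - (2 * m + 1) * p : ℝ)| ≤
      ((k : ℝ) - 1) * (p - q) := by
    exact_mod_cast hc
  have e : (p : ℝ) * (2 * (t * q) - (2 * m + 1)) =
      q * (2 * (t * p) - (2 * l + 1)) + ((2 * l + 1) * q - (2 * m + 1) * p) := by ring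
  have tri := abs_add_le ((q : ℝ) * (2 * (t * p) - (2 * l + 1)))
    ((2 * l + 1) * q - (2 * m + 1) * p)
  rw [← e, abs_mul, abs_mul, abs_of_pos hp', abs_of_pos hq'] at tri
  refine le_of_mul_le_mul_left ?_ hp'
  have h1 := mul_le_mul_of_nonneg_left tri hk.le
  have h2 := mul_le_mul_of_nonneg_left h hq'.le
  linarith

theorem exists_abs_add_two_mul_le (x q : ℤ) (hq : 0 < q) : ∃ l : ℤ, |x + 2 * l * q| ≤ q := by
  refine ⟨-((x + q) / (2 * q)), ?_⟩
  have h1 := Int.emod_add_mul_ediv (x + q) (2 * q)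
  have h2 := Int.emod_nonneg (x + q) (show 2 * q ≠ 0 by omega)
  have h3 := Int.emod_lt_of_pos (x + q) (show 0 < 2 * q by omega)
  have e : x + 2 * -((x + q) / (2 * q)) * q = (x + q) % (2 * q) - q := by linarith
  rw [e, abs_le]
  constructor <;> linarith

theorem exists_centers_close_gcd (p q : ℤ) (hp : 0 < p) :
    ∃ l m : ℤ, |(2 * l + 1) * q - (2 * m + 1) * p| ≤ Int.gcd p q := by
  obtain ⟨s, hs⟩ := exists_abs_add_two_mul_le (q - p) (Int.gcd p q)
    (by exact_mod_cast Int.gcd_pos_of_ne_zero_left q hp.ne')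
  refine ⟨s * Int.gcdB p q, -(s * Int.gcdA p q), ?_⟩
  have e : (2 * (s * Int.gcdB p q) + 1) * q - (2 * -(s * Int.gcdA p q) + 1) * p =
      q - p + 2 * s * Int.gcd p q := by
    rw [Int.gcd_eq_gcd_ab p q]; ring
  rwa [e]

/-- Some point of any safe interval of a runner is also safe for a runner that is at least as fast. -/
theorem exists_inSafe_inSafe {k : ℕ} (hk : 3 ≤ k) {p q : ℤ} (hq : 0 < q) (hqp : q ≤ p) (m : ℤ) :
    ∃ (t : ℝ) (l : ℤ), InSafe k p l t ∧ InSafe k q m t := by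
  have hq' : (0 : ℝ) < q := by exact_mod_cast hq
  have hqp' : (q : ℝ) ≤ p := by exact_mod_cast hqp
  have hp' : (0 : ℝ) < p := hq'.trans_le hqp'
  have hk' : (3 : ℝ) ≤ k := by exact_mod_cast hk
  obtain ⟨l, hl⟩ := exists_abs_add_two_mul_le (q - (2 * m + 1) * p) q hq
  have hl' : |((2 * l + 1) * q - (2 * m + 1) * p : ℝ)| ≤ q := by
    have e : q - (2 * m + 1) * p + 2 * l * q = (2 * l + 1) * q - (2 * m + 1) * p := by ring
    rw [e] at hl
    exact_mod_cast hl
  -- The midpoint of the two centres: each of the two errors is halved.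
  refine ⟨((2 * m + 1) / (2 * q) + (2 * l + 1) / (2 * p)) / 2, l, ?_, ?_⟩
  · have e : 2 * (((2 * m + 1) / (2 * q) + (2 * l + 1) / (2 * p)) / 2 * (p : ℝ)) - (2 * l + 1)
        = -((2 * l + 1) * q - (2 * m + 1) * p) / (2 * q) := by field_simp; ring
    have b : |-((2 * l + 1) * q - (2 * m + 1) * p : ℝ) / (2 * q)| ≤ 1 / 2 := by
      rw [abs_div, abs_neg, abs_of_pos (by positivity : (0 : ℝ) < 2 * q),
        div_le_iff₀ (by positivity)]
      linarith
    unfold InSafe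
    rw [e]
    nlinarith
  · have e : 2 * (((2 * m + 1) / (2 * q) + (2 * l + 1) / (2 * p)) / 2 * (q : ℝ)) - (2 * m + 1)
        = ((2 * l + 1) * q - (2 * m + 1) * p) / (2 * p) := by field_simp; ring
    have b : |((2 * l + 1) * q - (2 * m + 1) * p : ℝ) / (2 * p)| ≤ 1 / 2 := by
      rw [abs_div, abs_of_pos (by positivity : (0 : ℝ) < 2 * p),
        div_le_iff₀ (by positivity)]
      linarith
    unfold InSafe
    rw [e]
    nlinarith

/-- Theorem 8: suppose the speeds are nonincreasing, `(k-1)·n_j ≥ 2k·n_{j+1}` for all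
`2 ≤ j ≤ k-2` (speeds indexed `1, …, k`; here `i`, `j` are the 0-based indices of
`n_j`, `n_{j+1}` respectively), and `(k+1)·gcd(n_{k-1}, n_k) ≤ (k-1)·(n_{k-1} - n_k)`.
Then `n` is a lonely runner instance. -/
theorem lonely_runner_lacunary (k : ℕ) (hk : 2 ≤ k)
    (n : Fin k → ℤ) (hn : ∀ j, 0 < n j)
    (hmono : ∀ i j : Fin k, i ≤ j → n j ≤ n i)
    (hlac : ∀ i j : Fin k, (j : ℕ) = (i : ℕ) + 1 → 1 ≤ (i : ℕ) → (j : ℕ) ≤ k - 2 →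
      2 * (k : ℤ) * n j ≤ ((k : ℤ) - 1) * n i)
    (hgcd : ((k : ℤ) + 1) * (Int.gcd (n ⟨k - 2, by omega⟩) (n ⟨k - 1, by omega⟩) : ℤ) ≤
      ((k : ℤ) - 1) * (n ⟨k - 2, by omega⟩ - n ⟨k - 1, by omega⟩)) :
    IsLonelyRunnerInstance k n := by
  -- The `d + 2` slowest runners are all safe throughout a complete safe interval of the fastest
  -- among them, whose index is `i`; the lacunarity hypothesis forces `1 ≤ i` in the inductive step.
  have key : ∀ (d i : ℕ) (hi : i < k), i + d = k - 2 → (1 ≤ i ∨ d = 0) →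
      ∃ m : ℤ, ∀ t : ℝ, InSafe k (n ⟨i, hi⟩) m t →
        ∀ j : Fin k, i ≤ j → ∃ l : ℤ, InSafe k (n j) l t := by
    intro d
    induction d with
    | zero =>
      intro i hi hik _
      obtain rfl : i = k - 2 := by omega
      obtain ⟨l, m, hlm⟩ := exists_centers_close_gcd (n ⟨k - 2, hi⟩) (n ⟨k - 1, by omega⟩) (hn _)
      refine ⟨l, fun t ht j hj => ?_⟩
      obtain h | h : (j : ℕ) = k - 2 ∨ (j : ℕ) = k - 1 := by omega
      · obtain rfl : j = ⟨k - 2, hi⟩ := Fin.ext h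
        exact ⟨l, ht⟩
      · have hk1 : k - 1 < k := by omega
        obtain rfl : j = ⟨k - 1, hk1⟩ := Fin.ext h
        refine ⟨m, ht.of_centers_close (hn _) (hn _) (le_trans ?_ hgcd)⟩
        exact mul_le_mul_of_nonneg_left hlm (by positivity)
    | succ d ih =>
      intro i hi hik hi1
      have hi1 : 1 ≤ i := by omega
      obtain ⟨m, hm⟩ := ih (i + 1) (by omega) (by omega) (Or.inl (by omega))
      have hl := hlac ⟨i, hi⟩ ⟨i + 1, by omega⟩ rfl hi1 (by simp only; omega)
      set p := n ⟨i, hi⟩ with hp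
      set q := n ⟨i + 1, by omega⟩ with hq
      obtain ⟨l, hlq⟩ := exists_abs_add_two_mul_le (q - (2 * m + 1) * p) q (hn _)
      have hc : ((k : ℤ) + 1) * |(2 * l + 1) * q - (2 * m + 1) * p| ≤
          ((k : ℤ) - 1) * (p - q) := by
        have e : q - (2 * m + 1) * p + 2 * l * q = (2 * l + 1) * q - (2 * m + 1) * p := by ring
        rw [e] at hlq
        have := mul_le_mul_of_nonneg_left hlq (by positivity : (0 : ℤ) ≤ (k : ℤ) + 1)
        linarith
      refine ⟨l, fun t ht j hj => ?_⟩
      obtain h | h : (j : ℕ) = i ∨ i + 1 ≤ (j : ℕ) := by omega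
      · obtain rfl : j = ⟨i, hi⟩ := Fin.ext h
        exact ⟨l, ht⟩
      · exact hm t (ht.of_centers_close (hn _) (hn _) hc) j h
  suffices ∃ t : ℝ, ∀ j : Fin k, ∃ l : ℤ, InSafe k (n j) l t by
    obtain ⟨t, ht⟩ := this
    refine ⟨t, fun j => ?_⟩
    obtain ⟨l, hl⟩ := ht j
    exact hl.le_distNearestInt
  obtain rfl | hk3 : k = 2 ∨ 3 ≤ k := by omega
  · obtain ⟨m, hm⟩ := key 0 0 (by omega) rfl (Or.inr rfl)
    have h0 : (n ⟨0, by omega⟩ : ℝ) ≠ 0 := by exact_mod_cast (hn _).ne'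
    refine ⟨(2 * m + 1) / (2 * n ⟨0, by omega⟩), fun j => hm _ ?_ j (Nat.zero_le _)⟩
    have e : 2 * ((2 * (m : ℝ) + 1) / (2 * n ⟨0, by omega⟩) * n ⟨0, by omega⟩) - (2 * m + 1)
        = 0 := by
      field_simp; ring
    unfold InSafe
    rw [e]
    norm_num
  · obtain ⟨m, hm⟩ := key (k - 3) 1 (by omega) (by omega) (Or.inl le_rfl)
    obtain ⟨t, l, h0, h1⟩ := exists_inSafe_inSafe hk3 (hn ⟨1, by omega⟩)
      (hmono ⟨0, by omega⟩ ⟨1, by omega⟩ (by simp)) m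
    refine ⟨t, fun j => ?_⟩
    obtain h | h : (j : ℕ) = 0 ∨ 1 ≤ (j : ℕ) := by omega
    · have hk0 : 0 < k := by omega
      obtain rfl : j = ⟨0, hk0⟩ := Fin.ext h
      exact ⟨l, h0⟩
    · exact hm t h1 j h
end

section
/- Let k ≥ 1, let n_1, …, n_k be positive integers, and let s_1, …, s_k be real numbers. Then there exists a real number t such that for all 1 ≤ j ≤ k the distance of s_j + t·n_j to the nearest integer is at least 1/(2k). (Schoenberg's theorem on runners with arbitrary starting positions.) -/
open MeasureTheory in
/-- Two nonempty open sets covering a connected space overlap, and the overlap has positive measure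
when nonempty open sets do. -/
theorem one_lt_measure_add_of_open_cover {X : Type*} [TopologicalSpace X] [PreconnectedSpace X]
    [MeasurableSpace X] [BorelSpace X] (μ : Measure X) [IsProbabilityMeasure μ]
    [μ.IsOpenPosMeasure] {U V : Set X} (hU : IsOpen U) (hV : IsOpen V) (hUV : U ∪ V = Set.univ)
    (hU0 : U.Nonempty) (hV0 : V.Nonempty) : 1 < μ U + μ V := by
  have hne : (U ∩ V).Nonempty := by
    simpa using isPreconnected_univ U V hU hV hUV.ge (by simpa using hU0) (by simpa using hV0)
  have hpos : 0 < μ (U ∩ V) := (hU.inter hV).measure_pos μ hne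
  rw [← measure_union_add_inter U hV.measurableSet, hUV, measure_univ]
  exact ENNReal.lt_add_right ENNReal.one_ne_top hpos.ne'

theorem norm_coe_le_distNearestInt (x : ℝ) : ‖(x : UnitAddCircle)‖ ≤ distNearestInt x := by
  rw [UnitAddCircle.norm_eq]
  exact le_ciInf fun m => round_le x m

open MeasureTheory in
theorem volume_shifted_preimage_le (a : UnitAddCircle) {m : ℤ} (hm : m ≠ 0) (r : ℝ) :
    volume ((fun x : UnitAddCircle => a + m • x) ⁻¹' Metric.ball 0 r) ≤ ENNReal.ofReal (2 * r) := by
  have hmp : MeasurePreserving (fun x : UnitAddCircle => a + m • x) volume volume :=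
    (measurePreserving_add_left volume a).comp (MeasureTheory.Measure.measurePreserving_zsmul volume hm)
  rw [hmp.measure_preimage Metric.isOpen_ball.measurableSet.nullMeasurableSet]
  refine (measure_mono Metric.ball_subset_closedBall).trans ?_
  rw [AddCircle.volume_closedBall]
  exact ENNReal.ofReal_le_ofReal (min_le_right _ _)

theorem shifted_zsmul_surjective (a : UnitAddCircle) {m : ℤ} (hm : m ≠ 0) :
    Function.Surjective (fun x : UnitAddCircle => a + m • x) := fun y =>
  ⟨DivisibleBy.div (y - a) m, by
    change a + m • DivisibleBy.div (y - a) m = y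
    rw [DivisibleBy.div_cancel _ hm, add_sub_cancel]⟩

open MeasureTheory in
/-- The theorem on the circle: the sets of bad times do not cover. -/
theorem exists_forall_le_norm_shifted (k : ℕ) (hk : 1 ≤ k)
    (n : Fin k → ℤ) (hn : ∀ j, n j ≠ 0) (a : Fin k → UnitAddCircle) :
    ∃ x : UnitAddCircle, ∀ j, (1 : ℝ) / (2 * k) ≤ ‖a j + n j • x‖ := by
  by_contra! hcon
  have hk' : (1 : ℝ) ≤ k := by exact_mod_cast hk
  set r : ℝ := 1 / (2 * k) with hr
  have hr0 : 0 < r := by positivity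
  have hr1 : r ≤ 1 / 2 := one_div_le_one_div_of_le (by norm_num) (by linarith)
  let A : Fin k → Set UnitAddCircle := fun j => (fun x => a j + n j • x) ⁻¹' Metric.ball 0 r
  have hmem : ∀ j x, x ∈ A j ↔ ‖a j + n j • x‖ < r := fun j x => by simp [A]
  have hopen : ∀ j, IsOpen (A j) := fun j => Metric.isOpen_ball.preimage (by fun_prop)
  let i : Fin k := ⟨0, hk⟩
  have hcover : A i ∪ ⋃ j ∈ Finset.univ.erase i, A j = Set.univ := by
    refine Set.eq_univ_of_forall fun x => ?_
    obtain ⟨j, hj⟩ := hcon x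
    by_cases h : j = i
    · exact Or.inl ((hmem i x).2 (h ▸ hj))
    · exact Or.inr (Set.mem_biUnion (by simp [h]) ((hmem j x).2 hj))
  have hA0 : (A i).Nonempty := by
    obtain ⟨x, hx⟩ := shifted_zsmul_surjective (a i) (hn i) 0
    exact ⟨x, (hmem i x).2 (by simpa [show a i + n i • x = 0 from hx] using hr0)⟩
  have hB0 : (⋃ j ∈ Finset.univ.erase i, A j).Nonempty := by
    obtain ⟨x, hx⟩ := shifted_zsmul_surjective (a i) (hn i) ((1 / 2 : ℝ) : UnitAddCircle)
    refine ⟨x, (hcover.ge (Set.mem_univ x)).resolve_left fun h => ?_⟩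
    rw [hmem, show a i + n i • x = _ from hx, AddCircle.norm_half_period_eq, abs_one] at h
    exact absurd h hr1.not_gt
  have : IsProbabilityMeasure (volume : Measure UnitAddCircle) :=
    ⟨UnitAddCircle.measure_univ⟩
  have hlt := one_lt_measure_add_of_open_cover volume (hopen i)
    (isOpen_biUnion fun j _ => hopen j) hcover hA0 hB0
  refine absurd hlt (not_lt.2 ?_)
  calc volume (A i) + volume (⋃ j ∈ Finset.univ.erase i, A j)
      ≤ volume (A i) + ∑ j ∈ Finset.univ.erase i, volume (A j) := by
        gcongr; exact measure_biUnion_finset_le _ _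
    _ = ∑ j, volume (A j) := Finset.add_sum_erase _ (fun j => volume (A j)) (Finset.mem_univ i)
    _ ≤ ∑ _j : Fin k, ENNReal.ofReal (2 * r) :=
        Finset.sum_le_sum fun j _ => volume_shifted_preimage_le (a j) (hn j) r
    _ = ENNReal.ofReal (k * (2 * r)) := by
        rw [Finset.sum_const, Finset.card_univ, Fintype.card_fin, ← ENNReal.ofReal_nsmul,
          nsmul_eq_mul]
    _ = 1 := by
        rw [show (k : ℝ) * (2 * r) = 1 by rw [hr]; field_simp, ENNReal.ofReal_one]

/-- Theorem 11 (Schoenberg 1976): given positive integers `n₁, …, n_k` and real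
starting positions `s₁, …, s_k`, there is a time `t` such that every `s_j + t·n_j`
has distance at least `1/(2k)` to the nearest integer. -/
theorem schoenberg_shifted_runners (k : ℕ) (hk : 1 ≤ k)
    (n : Fin k → ℤ) (hn : ∀ j, 0 < n j) (s : Fin k → ℝ) :
    ∃ t : ℝ, ∀ j : Fin k, (1 : ℝ) / (2 * k) ≤ distNearestInt (s j + t * n j) := by
  obtain ⟨x, hx⟩ := exists_forall_le_norm_shifted k hk n (fun j => (hn j).ne')
    (fun j => (s j : UnitAddCircle))
  obtain ⟨t, rfl⟩ := QuotientAddGroup.mk_surjective x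
  refine ⟨t, fun j => (hx j).trans ?_⟩
  have h := norm_coe_le_distNearestInt (s j + n j • t)
  rw [AddCircle.coe_add, AddCircle.coe_zsmul, zsmul_eq_mul, mul_comm] at h
  exact h
end

section
/- Let n_1 and n_2 be positive integers with n_1 ≠ n_2. Then for every translation vector t = (t_1, t_2) ∈ ℝ² the translate P((n_1, n_2)) + t contains an integer point; that is, there exist integers x_1, x_2, a real number λ, and reals μ_1, μ_2 ∈ [1/3, 2/3] such that x_1 = λ·n_1 − μ_1 + t_1 and x_2 = λ·n_2 − μ_2 + t_2. (The case k = 2 of Conjecture 10.) -/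
/-!
Write `n = g • (a₁, a₂)` with `a₁, a₂` coprime. Eliminating `lam`, the claim asks for integers
`x₁, x₂` with `a₂ x₁ - a₁ x₂ = c - a₂ μ₁ + a₁ μ₂`, where `c = a₂ t₁ - a₁ t₂`. As `μ₁, μ₂` range over
`[1/3, 2/3]` the right side fills an interval of length `(a₁ + a₂) / 3`, which is at least `1`
because distinct positive integers have sum at least `3`; so it attains some integer `m`. By
Bézout, `m` is also a value of the left side.
-/

/-- The case `k = 2` of Conjecture 10: for distinct positive integer speeds
`n₁ ≠ n₂`, every translate of the lonely runner polyhedron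
`P(n) = ℝ n - [1/3, 2/3]²` contains an integer point. -/
theorem translated_lrPoly_contains_lattice_point_two_runners
    (n₁ n₂ : ℤ) (hn₁ : 0 < n₁) (hn₂ : 0 < n₂) (hne : n₁ ≠ n₂) (t₁ t₂ : ℝ) :
    ∃ (x₁ x₂ : ℤ) (lam mu₁ mu₂ : ℝ),
      (1 : ℝ) / 3 ≤ mu₁ ∧ mu₁ ≤ 2 / 3 ∧ (1 : ℝ) / 3 ≤ mu₂ ∧ mu₂ ≤ 2 / 3 ∧
      (x₁ : ℝ) = lam * n₁ - mu₁ + t₁ ∧ (x₂ : ℝ) = lam * n₂ - mu₂ + t₂ := by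
  obtain ⟨g, a₁, a₂, hg, ha₁, ha₂, hsum, u, v, huv⟩ :
      ∃ g a₁ a₂ : ℤ, 0 < g ∧ n₁ = a₁ * g ∧ n₂ = a₂ * g ∧ 3 ≤ a₁ + a₂ ∧
        ∃ u v : ℤ, u * a₁ + v * a₂ = 1 := by
    have hpos : 0 < Int.gcd n₁ n₂ := Int.gcd_pos_of_ne_zero_left _ hn₁.ne'
    obtain ⟨a₁, a₂, hco, h₁, h₂⟩ := Int.exists_gcd_one hpos
    have hg : (0 : ℤ) < Int.gcd n₁ n₂ := by exact_mod_cast hpos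
    have p₁ : 0 < a₁ := pos_of_mul_pos_left (h₁ ▸ hn₁) hg.le
    have p₂ : 0 < a₂ := pos_of_mul_pos_left (h₂ ▸ hn₂) hg.le
    have hne' : a₁ ≠ a₂ := fun h => hne (h₁.trans ((congrArg (· * _) h).trans h₂.symm))
    exact ⟨_, a₁, a₂, hg, h₁, h₂, by omega, Int.isCoprime_iff_gcd_eq_one.mpr hco⟩
  have p₁ : (0 : ℝ) < a₁ := by
    exact_mod_cast pos_of_mul_pos_left (ha₁ ▸ hn₁) hg.le
  have hg' : (0 : ℝ) < g := by exact_mod_cast hg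
  have hs : (3 : ℝ) ≤ a₁ + a₂ := by exact_mod_cast hsum
  have huv' : (u : ℝ) * a₁ + v * a₂ = 1 := by exact_mod_cast huv
  set c : ℝ := a₂ * t₁ - a₁ * t₂ with hc
  obtain ⟨m, hm₁, hm₂⟩ : ∃ m : ℤ, c - a₂ * (2 / 3) + a₁ * (1 / 3) ≤ m ∧
      (m : ℝ) ≤ c - a₂ * (1 / 3) + a₁ * (2 / 3) :=
    ⟨⌊c - a₂ * (1 / 3) + a₁ * (2 / 3)⌋,
      by linarith [Int.lt_floor_add_one (c - a₂ * (1 / 3) + a₁ * (2 / 3))], Int.floor_le _⟩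
  -- `s` locates `m` on the diagonal from `μ = (2/3, 1/3)` to `μ = (1/3, 2/3)`, whose ends give
  -- the two ends of the interval.
  obtain ⟨s, hs₀, hs₁, hsm⟩ : ∃ s : ℝ, 0 ≤ s ∧ s ≤ 1 ∧
      (m : ℝ) = c - a₂ * (2 / 3 - s / 3) + a₁ * (1 / 3 + s / 3) := by
    have hpos : (0 : ℝ) < a₁ + a₂ := by linarith
    refine ⟨3 * (m - c + a₂ * (2 / 3) - a₁ * (1 / 3)) / (a₁ + a₂), ?_, ?_, ?_⟩
    · exact div_nonneg (by linarith) hpos.le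
    · rw [div_le_one hpos]; linarith
    · field_simp; ring
  refine ⟨m * v, -(m * u), (m * v + (2 / 3 - s / 3) - t₁) / n₁, 2 / 3 - s / 3, 1 / 3 + s / 3,
    by linarith, by linarith, by linarith, by linarith, ?_, ?_⟩
  · have : (n₁ : ℝ) ≠ 0 := by exact_mod_cast hn₁.ne'
    push_cast; field_simp; ring
  · rw [ha₁, ha₂]
    push_cast
    have h : (m * v + (2 / 3 - s / 3) - t₁) / (a₁ * g) * (a₂ * g)
        = (m * v + (2 / 3 - s / 3) - t₁) * a₂ / a₁ := by
      field_simp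
    rw [h, eq_comm, ← sub_eq_zero]
    field_simp
    linear_combination 3 * m * huv' + 3 * hsm
end
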